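/- Let X be a compact metric space. If f : X → X is a weakly mixing and strongly transitive continuous map, then f is Δ-transitive; equivalently, for every positive integer m and all nonempty open sets U, V₁, …, V_m ⊆ X there exists n ≥ 1 such that U ∩ f⁻ⁿ(V₁) ∩ f⁻²ⁿ(V₂) ∩ … ∩ f⁻ᵐⁿ(V_m) ≠ ∅. -/

import Mathlib

open Set Function

/-- A continuous self-map is topologically transitive if every pair of nonempty
open sets is connected by some positive iterate. -/
def TopTransitive {X : Type*} [TopologicalSpace X] (f : X → X) : Prop :=
  ∀ U V : Set X, IsOpen U → IsOpen V → U.Nonempty → V.Nonempty →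
    ∃ n : ℕ, 0 < n ∧ (f^[n] '' U ∩ V).Nonempty

/-- The map `f^{(∗m)} = f × f² × ⋯ × f^m` acting on `X^m` (coordinates indexed by `Fin m`,
where coordinate `i` is moved by `f^[i+1]`). -/
def starMap {X : Type*} (f : X → X) (m : ℕ) : (Fin m → X) → (Fin m → X) :=
  fun x i => f^[(i : ℕ) + 1] (x i)

/-- `f` is weakly mixing if `f × f` is topologically transitive. -/
def WeaklyMixing {X : Type*} [TopologicalSpace X] (f : X → X) : Prop :=
  TopTransitive (fun p : X × X => (f p.1, f p.2))

/-- `f` is multi-transitive if `f × f² × ⋯ × f^m` is topologically transitive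
for every `m ≥ 1`. -/
def MultiTransitive {X : Type*} [TopologicalSpace X] (f : X → X) : Prop :=
  ∀ m : ℕ, 1 ≤ m → TopTransitive (starMap f m)

/-- `f` is Δ-transitive if for each `m ≥ 1` there is a residual set `Y ⊆ X` such that
for every `x ∈ Y` the diagonal tuple `(x, …, x)` has dense orbit under `f × f² × ⋯ × f^m`. -/
def DeltaTransitive {X : Type*} [TopologicalSpace X] (f : X → X) : Prop :=
  ∀ m : ℕ, 1 ≤ m → ∃ Y : Set X, Y ∈ residual X ∧
    ∀ x ∈ Y, Dense (Set.range fun n : ℕ => (starMap f m)^[n] (fun _ : Fin m => x))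

/-- A set `S ⊆ ℕ` is syndetic if there is `L > 0` with `[n, n+L] ∩ S ≠ ∅` for every `n`. -/
def Syndetic (S : Set ℕ) : Prop :=
  ∃ L : ℕ, 0 < L ∧ ∀ n : ℕ, ∃ k ∈ S, n ≤ k ∧ k ≤ n + L

/-- `N(U,V;f) = {n > 0 : f^n(U) ∩ V ≠ ∅}`. -/
def NSet {X : Type*} (f : X → X) (U V : Set X) : Set ℕ :=
  {n | 0 < n ∧ (f^[n] '' U ∩ V).Nonempty}

/-- `f` is syndetically transitive if `N(U,V;f)` is syndetic for all nonempty open `U, V`. -/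
def SyndeticallyTransitive {X : Type*} [TopologicalSpace X] (f : X → X) : Prop :=
  ∀ U V : Set X, IsOpen U → IsOpen V → U.Nonempty → V.Nonempty → Syndetic (NSet f U V)

/-- `f` is strongly transitive if for every nonempty open `U` there is `M > 0` with
`⋃_{j=1}^M f^j(U) = X`. -/
def StronglyTransitive {X : Type*} [TopologicalSpace X] (f : X → X) : Prop :=
  ∀ U : Set X, IsOpen U → U.Nonempty →
    ∃ M : ℕ, 0 < M ∧ (⋃ j ∈ Finset.Icc 1 M, f^[j] '' U) = Set.univ

/-- `f` is minimal if the only nonempty closed `f`-invariant subset is the whole space. -/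
def MinimalMap {X : Type*} [TopologicalSpace X] (f : X → X) : Prop :=
  ∀ K : Set X, IsClosed K → K.Nonempty → f '' K ⊆ K → K = Set.univ

/-- Return-time set without positivity. -/
def RSet {X : Type*} (f : X → X) (A B : Set X) : Set ℕ := {n | ∃ x ∈ A, f^[n] x ∈ B}

/-- Thickly syndetic sets. -/
def ThSynd (S : Set ℕ) : Prop :=
  ∀ L : ℕ, ∃ M : ℕ, ∀ n : ℕ, ∃ k, n ≤ k ∧ k ≤ n + M ∧ ∀ l ≤ L, k + l ∈ S

lemma ThSynd.inter {S T : Set ℕ} (hS : ThSynd S) (hT : ThSynd T) : ThSynd (S ∩ T) := by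
  intro L
  obtain ⟨MT, hMT⟩ := hT L
  obtain ⟨MS, hMS⟩ := hS (L + MT)
  refine ⟨MS + MT, fun n => ?_⟩
  obtain ⟨k, h1, h2, h3⟩ := hMS n
  obtain ⟨k', h1', h2', h3'⟩ := hMT k
  refine ⟨k', by omega, by omega, fun l hl => ⟨?_, h3' l hl⟩⟩
  have := h3 (k' - k + l) (by omega)
  rwa [show k + (k' - k + l) = k' + l by omega] at this

lemma ThSynd.scale {S : Set ℕ} (hS : ThSynd S) (i : ℕ) : ThSynd {n | (i + 1) * n ∈ S} := by
  intro L
  obtain ⟨M, hM⟩ := hS ((i + 1) * L + (i + 1))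
  refine ⟨M + 1, fun n => ?_⟩
  obtain ⟨k, h1, h2, h3⟩ := hM ((i + 1) * n)
  have hd := Nat.div_add_mod k (i + 1)
  have hm := Nat.mod_lt k (Nat.succ_pos i)
  set q := k / (i + 1) with hq
  refine ⟨q + 1, ?_, ?_, fun l hl => ?_⟩
  · have : n ≤ q := (Nat.le_div_iff_mul_le (Nat.succ_pos i)).2 (by linarith [mul_comm n (i + 1)])
    omega
  · by_contra hcon
    have : n + M + 1 ≤ q := by omega
    have h5 := Nat.mul_le_mul_left (i + 1) this
    have h6 : M ≤ (i + 1) * M := Nat.le_mul_of_pos_left _ (Nat.succ_pos i)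
    rw [mul_add, mul_add, mul_one] at h5
    omega
  · have h4 : (i + 1) * l ≤ (i + 1) * L := Nat.mul_le_mul_left _ hl
    have := h3 ((i + 1) * (q + 1 + l) - k) (by
      rw [mul_add, mul_add, mul_one]; omega)
    rwa [Nat.add_sub_cancel' (by rw [mul_add, mul_add, mul_one]; simp only [Nat.succ_eq_add_one] at hm; omega)] at this

lemma ThSynd.shift {S : Set ℕ} (hS : ThSynd S) (j : ℕ) : ThSynd {n | j ≤ n ∧ n - j ∈ S} := by
  intro L
  obtain ⟨M, hM⟩ := hS L
  refine ⟨M + j, fun n => ?_⟩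
  obtain ⟨k, h1, h2, h3⟩ := hM n
  refine ⟨k + j, by omega, by omega, fun l hl => ⟨by omega, ?_⟩⟩
  rw [show k + j + l - j = k + l by omega]
  exact h3 l hl

lemma ThSynd.iInter (m : ℕ) (S : Fin m → Set ℕ) (hS : ∀ i, ThSynd (S i)) :
    ThSynd (⋂ i, S i) := by
  induction m with
  | zero => intro L; exact ⟨0, fun n => ⟨n, le_rfl, le_rfl, fun l _ => by simp⟩⟩
  | succ m ih =>
    have h := (hS 0).inter (ih (fun i => S i.succ) (fun i => hS _))
    have e : (⋂ i, S i) = S 0 ∩ ⋂ i : Fin m, S i.succ := by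
      ext x; simp [Fin.forall_fin_succ]
    rw [e]; exact h

section
variable {X : Type*} [MetricSpace X] {f : X → X}

lemma st_surj (hst : StronglyTransitive f) : Surjective f := by
  intro x
  obtain ⟨M, -, h⟩ := hst univ isOpen_univ ⟨x, trivial⟩
  have hx : x ∈ (⋃ j ∈ Finset.Icc 1 M, f^[j] '' univ) := by rw [h]; exact mem_univ x
  simp only [mem_iUnion, Finset.mem_Icc] at hx
  obtain ⟨j, ⟨hj, -⟩, y, -, rfl⟩ := hx
  obtain ⟨j, rfl⟩ := Nat.exists_eq_add_of_le' hj
  exact ⟨f^[j] y, (iterate_succ_apply' f j y).symm⟩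

lemma furst (hf : Continuous f) (hwm : WeaklyMixing f) {A₁ B₁ A₂ B₂ : Set X}
    (hA₁ : IsOpen A₁) (hB₁ : IsOpen B₁) (hA₂ : IsOpen A₂) (hB₂ : IsOpen B₂)
    (nA₁ : A₁.Nonempty) (nB₁ : B₁.Nonempty) (nA₂ : A₂.Nonempty) (nB₂ : B₂.Nonempty) :
    ∃ A B : Set X, IsOpen A ∧ IsOpen B ∧ A.Nonempty ∧ B.Nonempty ∧
      RSet f A B ⊆ RSet f A₁ B₁ ∩ RSet f A₂ B₂ := by
  obtain ⟨k, -, p, ⟨⟨a, b⟩, ⟨ha, hb⟩, hab⟩, hp⟩ := hwm (A₁ ×ˢ B₁) (A₂ ×ˢ B₂) (hA₁.prod hB₁)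
    (hA₂.prod hB₂) (nA₁.prod nB₁) (nA₂.prod nB₂)
  have hit : ∀ (k : ℕ) (q : X × X),
      (fun p : X × X => (f p.1, f p.2))^[k] q = (f^[k] q.1, f^[k] q.2) := by
    intro k
    induction k with
    | zero => intro q; rfl
    | succ k ih => intro q; rw [iterate_succ_apply, ih]; rfl
  rw [hit] at hab
  subst hab
  refine ⟨A₁ ∩ f^[k] ⁻¹' A₂, B₁ ∩ f^[k] ⁻¹' B₂, hA₁.inter (hA₂.preimage (hf.iterate k)),
    hB₁.inter (hB₂.preimage (hf.iterate k)), ⟨a, ha, hp.1⟩, ⟨b, hb, hp.2⟩, ?_⟩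
  rintro n ⟨x, ⟨h1, h2⟩, h3, h4⟩
  refine ⟨⟨x, h1, h3⟩, ⟨f^[k] x, h2, ?_⟩⟩
  rw [mem_preimage, ← iterate_add_apply, add_comm, iterate_add_apply] at h4
  exact h4

lemma furst_many (hf : Continuous f) (hwm : WeaklyMixing f) (hs : Surjective f) {A B : Set X}
    (hA : IsOpen A) (hB : IsOpen B) (nA : A.Nonempty) (nB : B.Nonempty) (L : ℕ) :
    ∃ A' B' : Set X, IsOpen A' ∧ IsOpen B' ∧ A'.Nonempty ∧ B'.Nonempty ∧
      ∀ n ∈ RSet f A' B', ∀ l ≤ L, n + l ∈ RSet f A B := by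
  induction L with
  | zero =>
    refine ⟨A, B, hA, hB, nA, nB, fun n hn l hl => ?_⟩
    obtain rfl : l = 0 := by omega
    exact hn
  | succ L ih =>
    obtain ⟨A₁, B₁, h1, h2, h3, h4, h5⟩ := ih
    obtain ⟨A₂, B₂, g1, g2, g3, g4, g5⟩ := furst hf hwm h1 h2 hA
      (hB.preimage (hf.iterate (L + 1))) h3 h4 nA (nB.preimage (hs.iterate (L + 1)))
    refine ⟨A₂, B₂, g1, g2, g3, g4, fun n hn l hl => ?_⟩
    rcases Nat.lt_or_ge L l with h | h
    · obtain rfl : l = L + 1 := by omega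
      obtain ⟨x, hx, hx'⟩ := (g5 hn).2
      refine ⟨x, hx, ?_⟩
      rw [add_comm, iterate_add_apply]
      exact hx'
    · exact h5 n (g5 hn).1 l h

lemma rset_thsynd (hf : Continuous f) (hwm : WeaklyMixing f) (hst : StronglyTransitive f)
    {A B : Set X} (hA : IsOpen A) (hB : IsOpen B) (nA : A.Nonempty) (nB : B.Nonempty) :
    ThSynd (RSet f A B) := by
  intro L
  have hs := st_surj hst
  obtain ⟨A', B', h1, h2, h3, h4, h5⟩ := furst_many hf hwm hs hA hB nA nB L
  obtain ⟨M, -, hM⟩ := hst A' h1 h3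
  refine ⟨M, fun n => ?_⟩
  obtain ⟨y, hy⟩ := h4.preimage (hs.iterate n)
  have hx : y ∈ (⋃ j ∈ Finset.Icc 1 M, f^[j] '' A') := hM ▸ mem_univ y
  simp only [mem_iUnion, Finset.mem_Icc] at hx
  obtain ⟨j, ⟨hj, hj'⟩, a, ha, rfl⟩ := hx
  refine ⟨n + j, by omega, by omega, h5 _ ⟨a, ha, ?_⟩⟩
  rw [iterate_add_apply]
  exact hy

lemma multi_shift (hf : Continuous f) (hwm : WeaklyMixing f) (hst : StronglyTransitive f)
    (m j : ℕ) (A B : Fin m → Set X) (hA : ∀ i, IsOpen (A i)) (hB : ∀ i, IsOpen (B i))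
    (nA : ∀ i, (A i).Nonempty) (nB : ∀ i, (B i).Nonempty) :
    ∃ k : ℕ, ∀ i : Fin m, j ≤ ((i : ℕ) + 1) * k ∧
      ((i : ℕ) + 1) * k - j ∈ RSet f (A i) (B i) := by
  obtain ⟨M, hM⟩ := ThSynd.iInter m _ (fun i =>
    ((rset_thsynd hf hwm hst (hA i) (hB i) (nA i) (nB i)).shift j).scale i) 0
  obtain ⟨k, -, -, hk⟩ := hM 0
  have := hk 0 le_rfl
  simp only [mem_iInter] at this
  exact ⟨k, this⟩

lemma shrink (hf : Continuous f) (hwm : WeaklyMixing f) (hst : StronglyTransitive f)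
    (m : ℕ) (V : Fin m → Set X) (hV : ∀ i, IsOpen (V i)) (nV : ∀ i, (V i).Nonempty) (L : ℕ) :
    ∃ W : Fin m → Set X, (∀ i, IsOpen (W i)) ∧ (∀ i, (W i).Nonempty) ∧
      ∀ j ≤ L, ∃ k : ℕ, ∀ i : Fin m, j ≤ ((i : ℕ) + 1) * k ∧
        ∀ x ∈ W i, f^[((i : ℕ) + 1) * k - j] x ∈ V i := by
  induction L with
  | zero =>
    refine ⟨V, hV, nV, fun j hj => ⟨0, fun i => ⟨by omega, fun x hx => ?_⟩⟩⟩
    simpa using hx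
  | succ L ih =>
    obtain ⟨W, h1, h2, h3⟩ := ih
    obtain ⟨k, hk⟩ := multi_shift hf hwm hst m (L + 1) W V h1 hV h2 nV
    refine ⟨fun i => W i ∩ f^[((i : ℕ) + 1) * k - (L + 1)] ⁻¹' V i,
      fun i => (h1 i).inter ((hV i).preimage (hf.iterate _)), fun i => ?_, fun j hj => ?_⟩
    · obtain ⟨x, hx, hx'⟩ := (hk i).2
      exact ⟨x, hx, hx'⟩
    · rcases Nat.lt_or_ge L j with h | h
      · obtain rfl : j = L + 1 := by omega
        exact ⟨k, fun i => ⟨(hk i).1, fun x hx => hx.2⟩⟩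
      · obtain ⟨k', hk'⟩ := h3 j h
        exact ⟨k', fun i => ⟨(hk' i).1, fun x hx => (hk' i).2 x hx.1⟩⟩

lemma main_delta (hf : Continuous f) (hwm : WeaklyMixing f) (hst : StronglyTransitive f)
    (m : ℕ) : ∀ U : Set X, IsOpen U → U.Nonempty →
        ∀ V : Fin m → Set X, (∀ i, IsOpen (V i)) → (∀ i, (V i).Nonempty) →
          ∃ n : ℕ, 1 ≤ n ∧ ∃ x ∈ U, ∀ i : Fin m, f^[((i : ℕ) + 1) * n] x ∈ V i := by
  induction m with
  | zero => rintro U - ⟨x, hx⟩ V - -; exact ⟨1, le_rfl, x, hx, fun i => i.elim0⟩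
  | succ m ih =>
    intro U hU nU V hV nV
    have hs := st_surj hst
    obtain ⟨M, -, hM⟩ := hst U hU nU
    obtain ⟨W, h1, h2, h3⟩ := shrink hf hwm hst (m + 1) V hV nV M
    obtain ⟨n, hn, x, hx, hxi⟩ := ih (W 0) (h1 0) (h2 0) (fun i => W i.succ)
      (fun i => h1 _) (fun i => h2 _)
    obtain ⟨y, rfl⟩ := hs.iterate n x
    have hy : ∀ i : Fin (m + 1), f^[((i : ℕ) + 1) * n] y ∈ W i := by
      intro i
      refine Fin.cases ?_ (fun i => ?_) i
      · simpa using hx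
      · have := hxi i
        rw [← iterate_add_apply] at this
        rw [Fin.val_succ, add_mul (_ + 1), one_mul]
        exact this
    have hyM : y ∈ (⋃ j ∈ Finset.Icc 1 M, f^[j] '' U) := hM ▸ mem_univ y
    simp only [mem_iUnion, Finset.mem_Icc] at hyM
    obtain ⟨j, ⟨hj, hj'⟩, z, hz, rfl⟩ := hyM
    obtain ⟨k, hk⟩ := h3 j hj'
    refine ⟨n + k, by omega, z, hz, fun i => ?_⟩
    have := (hk i).2 _ (hy i)
    rw [← iterate_add_apply, ← iterate_add_apply] at this
    convert this using 2
    have := (hk i).1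
    rw [mul_add]; omega

lemma star_iter (m n : ℕ) (x : Fin m → X) (i : Fin m) :
    (starMap f m)^[n] x i = f^[((i : ℕ) + 1) * n] (x i) := by
  induction n generalizing x with
  | zero => rfl
  | succ n ih =>
    rw [iterate_succ_apply, ih, mul_add, mul_one, iterate_add_apply]; rfl

end

/-- A weakly mixing and strongly transitive continuous map on a compact
metric space is Δ-transitive; equivalently, for every `m ≥ 1` and nonempty open
`U, V₁, …, V_m` there is `n ≥ 1` with `U ∩ f⁻ⁿ(V₁) ∩ ⋯ ∩ f⁻ᵐⁿ(V_m) ≠ ∅`. -/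
theorem statement3 {X : Type*} [MetricSpace X] [CompactSpace X] (f : X → X)
    (hf : Continuous f) (hwm : WeaklyMixing f) (hst : StronglyTransitive f) :
    DeltaTransitive f ∧
      ∀ m : ℕ, 1 ≤ m → ∀ U : Set X, IsOpen U → U.Nonempty →
        ∀ V : Fin m → Set X, (∀ i, IsOpen (V i)) → (∀ i, (V i).Nonempty) →
          ∃ n : ℕ, 1 ≤ n ∧
            (U ∩ ⋂ i : Fin m, f^[((i : ℕ) + 1) * n] ⁻¹' V i).Nonempty := by
  have key := main_delta hf hwm hst
  refine ⟨fun m _ => ?_, fun m _ U hU nU V hV nV => ?_⟩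
  · let O := TopologicalSpace.countableBasis (Fin m → X)
    let W : Set (Fin m → X) → Set X := fun o =>
      ⋃ n : ℕ, {x | (starMap f m)^[n] (fun _ : Fin m => x) ∈ o}
    have hb := TopologicalSpace.isBasis_countableBasis (Fin m → X)
    refine ⟨⋂ o ∈ O, W o, ?_, fun x hx => ?_⟩
    · refine (countable_bInter_mem (TopologicalSpace.countable_countableBasis _)).2 fun o ho => ?_
      have hoo : IsOpen o := hb.isOpen ho
      refine residual_of_dense_open ?_ ?_
      · refine isOpen_iUnion fun n => hoo.preimage (continuous_pi fun i => ?_)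
        simp only [star_iter]
        exact hf.iterate _
      · rw [dense_iff_inter_open]
        intro U hU nU
        obtain ⟨p, hp⟩ := TopologicalSpace.nonempty_of_mem_countableBasis ho
        obtain ⟨V, hV, hVo⟩ := isOpen_pi_iff'.1 hoo p hp
        obtain ⟨n, -, x, hx, hxi⟩ := key m U hU nU V (fun i => (hV i).1)
          (fun i => ⟨_, (hV i).2⟩)
        refine ⟨x, hx, mem_iUnion.2 ⟨n, hVo fun i _ => ?_⟩⟩
        rw [star_iter]
        exact hxi i
    · rw [hb.dense_iff]
      intro o ho _
      obtain ⟨n, hn⟩ := mem_iUnion.1 (mem_iInter₂.1 hx o ho)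
      exact ⟨_, hn, n, rfl⟩
  · obtain ⟨n, hn, x, hx, hxi⟩ := key m U hU nU V hV nV
    exact ⟨n, hn, x, hx, mem_iInter.2 hxi⟩
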